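/- (Reparameterisation invariance of the Kawaguchi k-area.) Let 1 ≤ k ≤ n and let K : ℝⁿ × ⋀ᵏ(ℝⁿ) → ℝ be a continuous first-order k-areal Kawaguchi function. Let σ : ℝᵏ → ℝⁿ be C¹. Let P, Q ⊂ ℝᵏ be compact rectangles (products of compact intervals), and let φ : ℝᵏ → ℝᵏ be a C¹ map that is injective on Q, maps Q onto P, and satisfies det Dφ(s) > 0 for all s ∈ Q. Then ∫_Q K((σ ∘ φ)(s), D(σ∘φ)(s)(e₁) ∧ ⋯ ∧ D(σ∘φ)(s)(e_k)) ds = ∫_P K(σ(t), Dσ(t)(e₁) ∧ ⋯ ∧ Dσ(t)(e_k)) dt, where both integrals are with respect to Lebesgue measure on ℝᵏ; that is, the Kawaguchi k-area of a k-patch does not change under an orientation-preserving reparameterisation. -/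

import Mathlib

noncomputable section

/-- The `k`-th exterior power of `ℝⁿ` is a finite-dimensional real vector space. -/
instance extFinite (n k : ℕ) :
    Module.Finite ℝ (⋀[ℝ]^k (EuclideanSpace ℝ (Fin n))) := by
  rw [Module.Finite.iff_fg]
  refine Submodule.FG.pow ?_ k
  rw [LinearMap.range_eq_map]
  exact Submodule.FG.map _ Module.Finite.fg_top

instance extFree (n k : ℕ) :
    Module.Free ℝ (⋀[ℝ]^k (EuclideanSpace ℝ (Fin n))) :=
  Module.Free.of_divisionRing ℝ _

/-- A linear identification of `⋀ᵏ(ℝⁿ)` with a finite product of copies of `ℝ`, used to endow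
it with a norm (and in particular with its canonical topology as a finite-dimensional real
vector space). -/
def extEquiv (n k : ℕ) :
    (⋀[ℝ]^k (EuclideanSpace ℝ (Fin n))) ≃ₗ[ℝ]
      (Module.Free.ChooseBasisIndex ℝ (⋀[ℝ]^k (EuclideanSpace ℝ (Fin n))) → ℝ) :=
  (Module.Free.chooseBasis ℝ (⋀[ℝ]^k (EuclideanSpace ℝ (Fin n)))).equivFun

instance extNormedAddCommGroup (n k : ℕ) :
    NormedAddCommGroup (⋀[ℝ]^k (EuclideanSpace ℝ (Fin n))) :=
  NormedAddCommGroup.induced _ _ (extEquiv n k).toLinearMap (extEquiv n k).injective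

instance extNormedSpace (n k : ℕ) :
    NormedSpace ℝ (⋀[ℝ]^k (EuclideanSpace ℝ (Fin n))) :=
  NormedSpace.induced ℝ _ _ (extEquiv n k).toLinearMap

/-- The wedge `v₁ ∧ ⋯ ∧ v_k ∈ ⋀ᵏ(ℝⁿ)` of a family of `k` vectors, i.e. the image of the
canonical alternating map `ιMulti` in the `k`-th exterior power. -/
def wedge (n k : ℕ) (v : Fin k → EuclideanSpace ℝ (Fin n)) :
    ⋀[ℝ]^k (EuclideanSpace ℝ (Fin n)) :=
  ⟨ExteriorAlgebra.ιMulti ℝ k v, ExteriorAlgebra.ιMulti_range ℝ k (Set.mem_range_self v)⟩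

/-- The multivector lift `σ̂(t) = Dσ(t)(e₁) ∧ ⋯ ∧ Dσ(t)(e_k)` of a map `σ : ℝᵏ → ℝⁿ`. -/
def lift (n k : ℕ) (σ : EuclideanSpace ℝ (Fin k) → EuclideanSpace ℝ (Fin n))
    (t : EuclideanSpace ℝ (Fin k)) : ⋀[ℝ]^k (EuclideanSpace ℝ (Fin n)) :=
  wedge n k (fun i => fderiv ℝ σ t (EuclideanSpace.single i (1 : ℝ)))

theorem alt_map_det {k : ℕ} {M N : Type*} [AddCommGroup M] [Module ℝ M] [AddCommGroup N] [Module ℝ N]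
    (e : Module.Basis (Fin k) ℝ M) (f : M [⋀^Fin k]→ₗ[ℝ] N) (A : M →ₗ[ℝ] M) :
    f (fun i => A (e i)) = LinearMap.det A • f e := by
  have h : f = (LinearMap.toSpanSingleton ℝ N (f e)).compAlternatingMap e.det := by
    refine Module.Basis.ext_alternating e fun i hi => ?_
    let τ : Equiv.Perm (Fin k) := Equiv.ofBijective i (Finite.injective_iff_bijective.1 hi)
    have h1 : (fun j => e (i j)) = (e ∘ τ) := rfl
    rw [h1]
    simp [AlternatingMap.map_perm, Module.Basis.det_self]
  have h2 : e.det (fun i => A (e i)) = LinearMap.det A := by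
    have := e.det_comp A e
    rw [Module.Basis.det_self, mul_one] at this
    exact this
  have h3 := congrArg (fun g => g (fun i => A (e i))) h
  simp only [LinearMap.compAlternatingMap_apply, LinearMap.toSpanSingleton_apply, h2] at h3
  exact h3

theorem lift_comp (n k : ℕ) (σ : EuclideanSpace ℝ (Fin k) → EuclideanSpace ℝ (Fin n))
    (hσ : ContDiff ℝ 1 σ) (φ : EuclideanSpace ℝ (Fin k) → EuclideanSpace ℝ (Fin k))
    (hφ : ContDiff ℝ 1 φ) (s : EuclideanSpace ℝ (Fin k)) :
    lift n k (σ ∘ φ) s = LinearMap.det ((fderiv ℝ φ s).toLinearMap) • lift n k σ (φ s) := by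
  apply Subtype.ext
  have hc : fderiv ℝ (σ ∘ φ) s = (fderiv ℝ σ (φ s)).comp (fderiv ℝ φ s) :=
    fderiv_comp s (hσ.differentiable one_ne_zero _) (hφ.differentiable one_ne_zero _)
  have := alt_map_det (EuclideanSpace.basisFun (Fin k) ℝ).toBasis
    ((ExteriorAlgebra.ιMulti ℝ k).compLinearMap (fderiv ℝ σ (φ s)).toLinearMap)
    (fderiv ℝ φ s).toLinearMap
  change ExteriorAlgebra.ιMulti ℝ k _ = LinearMap.det ((fderiv ℝ φ s).toLinearMap) •
    ExteriorAlgebra.ιMulti ℝ k _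
  rw [hc]
  simpa [AlternatingMap.compLinearMap_apply, Function.comp_def] using this

/-- **Reparameterisation invariance of the Kawaguchi `k`-area.**  The Kawaguchi `k`-area of a
`k`-patch does not change under an orientation-preserving reparameterisation. -/
theorem kawaguchi_area_reparam_invariant
    (n k : ℕ) (hk : 1 ≤ k) (hkn : k ≤ n)
    (K : EuclideanSpace ℝ (Fin n) × ⋀[ℝ]^k (EuclideanSpace ℝ (Fin n)) → ℝ)
    (hhom : ∀ (x : EuclideanSpace ℝ (Fin n)) (w : ⋀[ℝ]^k (EuclideanSpace ℝ (Fin n))) (c : ℝ),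
      0 < c → K (x, c • w) = c * K (x, w))
    (hK : Continuous K)
    (σ : EuclideanSpace ℝ (Fin k) → EuclideanSpace ℝ (Fin n)) (hσ : ContDiff ℝ 1 σ)
    (P Q : Set (EuclideanSpace ℝ (Fin k)))
    (hP : ∃ a b : Fin k → ℝ,
      P = {t : EuclideanSpace ℝ (Fin k) | ∀ i, t i ∈ Set.Icc (a i) (b i)})
    (hQ : ∃ c d : Fin k → ℝ,
      Q = {s : EuclideanSpace ℝ (Fin k) | ∀ i, s i ∈ Set.Icc (c i) (d i)})
    (φ : EuclideanSpace ℝ (Fin k) → EuclideanSpace ℝ (Fin k)) (hφ : ContDiff ℝ 1 φ)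
    (hinj : Set.InjOn φ Q) (honto : φ '' Q = P)
    (hdet : ∀ s ∈ Q, 0 < LinearMap.det ((fderiv ℝ φ s).toLinearMap)) :
    (∫ s in Q, K ((σ ∘ φ) s, lift n k (σ ∘ φ) s)) = ∫ t in P, K (σ t, lift n k σ t) := by
  have hQm : MeasurableSet Q := by
    obtain ⟨c, d, rfl⟩ := hQ
    apply IsClosed.measurableSet
    simp only [Set.setOf_forall]
    exact isClosed_iInter fun i => isClosed_Icc.preimage (by fun_prop)
  rw [← honto, MeasureTheory.integral_image_eq_integral_abs_det_fderiv_smul MeasureTheory.volume hQm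
    (fun s _ => ((hφ.differentiable one_ne_zero) s).hasFDerivAt.hasFDerivWithinAt) hinj]
  refine MeasureTheory.setIntegral_congr_fun hQm fun s hs => ?_
  have h := hdet s hs
  have h2 : |(fderiv ℝ φ s).det| = LinearMap.det ((fderiv ℝ φ s).toLinearMap) := abs_of_pos h
  simp only [h2, smul_eq_mul, Function.comp_apply]
  rw [lift_comp n k σ hσ φ hφ s]
  exact hhom _ _ _ h

end
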